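/- Let d = 2 or d = 3, let Δt > 0 and L ≥ 0 satisfy Δt·L ≤ 1/4, and let w : ℝ^d → ℝ^d be an everywhere-differentiable map whose Jacobian matrix has Frobenius norm at most L at every point and which is bounded, with W := sup_{x ∈ ℝ^d} ‖w(x)‖. Let v : ℝ × ℝ^d → ℝ^m be continuously differentiable with compact support, and let t ∈ ℝ. Then (∫_{ℝ^d} ‖v(t, x) − v(t − Δt, x − Δt·w(x))‖² dx)^{1/2} ≤ √(2Δt) · [ (∫_{t−Δt}^{t} ∫_{ℝ^d} ‖∂_s v(s, y)‖² dy ds)^{1/2} + W · (∫_{t−Δt}^{t} ∫_{ℝ^d} ‖D_y v(s, y)‖_F² dy ds)^{1/2} ], where ∂_s v is the partial derivative of v in its first (time) variable, D_y v(s, y) is the Jacobian matrix of v(s, ·) at y, ‖·‖_F is its Frobenius norm, and all integrals are with respect to Lebesgue measure. -/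

import Mathlib

open MeasureTheory

/-- The Frobenius norm of the Jacobian matrix of `f` at `x`. -/
noncomputable def jacobianFrobeniusNorm {d m : ℕ}
    (f : EuclideanSpace ℝ (Fin d) → EuclideanSpace ℝ (Fin m))
    (x : EuclideanSpace ℝ (Fin d)) : ℝ :=
  Real.sqrt (∑ i, ∑ j, (fderiv ℝ f x (EuclideanSpace.single j (1 : ℝ)) i) ^ 2)

/-!
Along the segment `s ↦ (s, x - (t - s) • w x)`, which joins `(t - Δt, x - Δt • w x)` to `(t, x)`,
the function `v` has derivative `∂ₛv + D_y v (w x)`; so the fundamental theorem of calculus and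
Hölder's inequality in `s` bound the `Lᵖ` norm of the difference by the space-time `Lᵖ` norm of
`‖∂ₛv‖ + W ‖D_y v‖` composed with `(s, x) ↦ (s, x - (t - s) • w x)`. Removing this composition costs
the density of the image of Lebesgue measure under `x ↦ x - τ • w x`, `0 ≤ τ ≤ Δt`. That map is
injective, as `τ • w` is a contraction, and its Jacobian determinant is `det (1 - M)` with
`‖M‖_F ≤ Δt * L < 1`. The inverse `∑ Mᵏ` of `1 - M` has controlled Frobenius norm, hence, by the
inequality of arithmetic and geometric means, controlled determinant.
-/

open scoped ENNReal NNReal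

section Determinant

open scoped Matrix.Norms.Frobenius ComplexOrder

variable {n 𝕜 : Type*} [Fintype n] [RCLike 𝕜]

theorem prod_le_sum_div_card_pow {ι : Type*} {s : Finset ι} {z : ι → ℝ} (hz : ∀ i ∈ s, 0 ≤ z i) :
    ∏ i ∈ s, z i ≤ ((∑ i ∈ s, z i) / s.card) ^ s.card := by
  rcases s.eq_empty_or_nonempty with rfl | hs
  · simp
  have hcard : (0 : ℝ) < s.card := by exact_mod_cast hs.card_pos
  have amgm := Real.geom_mean_le_arith_mean s (fun _ => 1) z (by simp) (by simpa using hs) hz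
  simp only [Real.rpow_one, Finset.sum_const, nsmul_eq_mul, mul_one, one_mul] at amgm
  rwa [Real.rpow_inv_le_iff_of_pos (Finset.prod_nonneg hz)
    (div_nonneg (Finset.sum_nonneg hz) hcard.le) hcard, Real.rpow_natCast] at amgm

theorem frobenius_norm_sq_eq_sum {l m : Type*} [Fintype l] [Fintype m] (A : Matrix l m 𝕜) :
    ‖A‖ ^ 2 = ∑ i, ∑ j, ‖A i j‖ ^ 2 := by
  rw [Matrix.frobenius_norm_def, ← Real.sqrt_eq_rpow, Real.sq_sqrt (by positivity)]
  simp

theorem re_trace_conjTranspose_mul_self (A : Matrix n n 𝕜) :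
    RCLike.re (A.conjTranspose * A).trace = ‖A‖ ^ 2 := by
  rw [frobenius_norm_sq_eq_sum, Finset.sum_comm]
  simp only [Matrix.trace, Matrix.diag_apply, Matrix.mul_apply, Matrix.conjTranspose_apply,
    map_sum, RCLike.star_def, RCLike.conj_mul]
  norm_cast

variable [DecidableEq n]

theorem norm_det_le_trace_div_card_pow {A : Matrix n n 𝕜} (hA : A.PosSemidef) :
    ‖A.det‖ ≤ (RCLike.re A.trace / Fintype.card n) ^ Fintype.card n := by
  have hdet : ‖A.det‖ = ∏ i, hA.isHermitian.eigenvalues i := by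
    rw [hA.isHermitian.det_eq_prod_eigenvalues, norm_prod]
    exact Finset.prod_congr rfl fun i _ => RCLike.norm_of_nonneg (hA.eigenvalues_nonneg i)
  rw [hdet, hA.isHermitian.trace_eq_sum_eigenvalues, map_sum]
  simpa using prod_le_sum_div_card_pow fun i (_ : i ∈ Finset.univ) => hA.eigenvalues_nonneg i

theorem norm_det_le_frobenius_norm_div_sqrt_card_pow (A : Matrix n n 𝕜) :
    ‖A.det‖ ≤ (‖A‖ / √(Fintype.card n)) ^ Fintype.card n := by
  refine le_of_sq_le_sq ?_ (by positivity)
  calc ‖A.det‖ ^ 2 = ‖(A.conjTranspose * A).det‖ := by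
        rw [Matrix.det_mul, Matrix.det_conjTranspose, norm_mul, norm_star, sq]
    _ ≤ (‖A‖ ^ 2 / Fintype.card n) ^ Fintype.card n := by
        rw [← re_trace_conjTranspose_mul_self]
        exact norm_det_le_trace_div_card_pow (Matrix.posSemidef_conjTranspose_mul_self A)
    _ = _ := by rw [← pow_mul, mul_comm, pow_mul, div_pow ‖A‖, Real.sq_sqrt (by positivity)]

/-- Upper bound for `|det (1 - M)|⁻¹` over the `k × k` matrices `M` of Frobenius norm at most
`c < 1`: the Neumann series gives `‖(1 - M)⁻¹‖ ≤ √k + c / (1 - c)`, and `|det N| ≤ (‖N‖ / √k) ^ k`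
for every `N`. -/
noncomputable def invDetOneSubBound (k : ℕ) (c : ℝ) : ℝ :=
  (1 + c / ((1 - c) * √k)) ^ k

theorem invDetOneSubBound_nonneg (k : ℕ) {c : ℝ} (hc₀ : 0 ≤ c) (hc : c < 1) :
    0 ≤ invDetOneSubBound k c := by
  have : 0 < 1 - c := sub_pos.2 hc
  unfold invDetOneSubBound
  positivity

theorem invDetOneSubBound_le_two {k : ℕ} (hk : k = 2 ∨ k = 3) {c : ℝ} (hc₀ : 0 ≤ c)
    (hc : c ≤ 1 / 4) : invDetOneSubBound k c ≤ 2 := by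
  have hsub : 3 / 4 ≤ 1 - c := by linarith
  have hsqrt : 4 / 3 ≤ √(k : ℝ) := by
    refine Real.le_sqrt_of_sq_le ?_
    rcases hk with rfl | rfl <;> norm_num
  have hprod : 1 ≤ (1 - c) * √k := by
    calc (1 : ℝ) = 3 / 4 * (4 / 3) := by norm_num
      _ ≤ (1 - c) * √k := mul_le_mul hsub hsqrt (by norm_num) (by linarith)
  have hfrac₀ : 0 ≤ c / ((1 - c) * √k) := div_nonneg hc₀ (zero_le_one.trans hprod)
  have hfrac : c / ((1 - c) * √k) ≤ 1 / 4 := (div_le_self hc₀ hprod).trans hc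
  calc invDetOneSubBound k c ≤ (1 + 1 / 4) ^ k :=
        pow_le_pow_left₀ (by positivity) (by linarith) k
    _ ≤ 2 := by rcases hk with rfl | rfl <;> norm_num

theorem one_le_invDetOneSubBound_mul_norm_det {c : ℝ} (hc : c < 1) {M : Matrix n n 𝕜}
    (hM : ‖M‖ ≤ c) : 1 ≤ invDetOneSubBound (Fintype.card n) c * ‖(1 - M).det‖ := by
  set N := ∑' k : ℕ, M ^ k
  have hinv : N.det * (1 - M).det = 1 := by
    have hmul : N * (1 - M) = 1 := geom_series_mul_neg M (hM.trans_lt hc)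
    rw [← Matrix.det_mul, hmul, Matrix.det_one]
  have hone : ‖(1 : Matrix n n 𝕜)‖ = √(Fintype.card n) := by
    simpa using congrArg NNReal.toReal (Matrix.frobenius_nnnorm_one (n := n) (α := 𝕜))
  have hN : ‖N‖ ≤ √(Fintype.card n) + c / (1 - c) := by
    have : 0 < 1 - c := sub_pos.2 hc
    calc ‖N‖ ≤ √(Fintype.card n) - 1 + (1 - ‖M‖)⁻¹ :=
          hone ▸ tsum_geometric_le_of_norm_lt_one M (hM.trans_lt hc)
      _ ≤ √(Fintype.card n) - 1 + (1 - c)⁻¹ := by gcongr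
      _ = √(Fintype.card n) + c / (1 - c) := by field_simp; ring
  calc 1 = ‖N.det‖ * ‖(1 - M).det‖ := by rw [← norm_mul, hinv, norm_one]
    _ ≤ invDetOneSubBound (Fintype.card n) c * ‖(1 - M).det‖ := by
      gcongr
      refine (norm_det_le_frobenius_norm_div_sqrt_card_pow N).trans ?_
      rcases isEmpty_or_nonempty n with _ | _
      · simp [invDetOneSubBound]
      · have hcard : 0 < √(Fintype.card n : ℝ) := by positivity
        calc (‖N‖ / √(Fintype.card n)) ^ Fintype.card n
            ≤ ((√(Fintype.card n) + c / (1 - c)) / √(Fintype.card n)) ^ Fintype.card n := by gcongr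
          _ = _ := by rw [invDetOneSubBound, add_div, div_self hcard.ne', div_div]

end Determinant

section Jacobian

open scoped Matrix.Norms.Frobenius

variable {d m : ℕ}

/-- The Jacobian matrix of `f` at `x` in the standard bases. -/
noncomputable def jacobianMatrix (f : EuclideanSpace ℝ (Fin d) → EuclideanSpace ℝ (Fin m))
    (x : EuclideanSpace ℝ (Fin d)) : Matrix (Fin m) (Fin d) ℝ :=
  LinearMap.toMatrix (EuclideanSpace.basisFun (Fin d) ℝ).toBasis
    (EuclideanSpace.basisFun (Fin m) ℝ).toBasis (fderiv ℝ f x)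

theorem norm_jacobianMatrix (f : EuclideanSpace ℝ (Fin d) → EuclideanSpace ℝ (Fin m))
    (x : EuclideanSpace ℝ (Fin d)) : ‖jacobianMatrix f x‖ = jacobianFrobeniusNorm f x := by
  rw [jacobianFrobeniusNorm, ← Real.sqrt_sq (norm_nonneg _), frobenius_norm_sq_eq_sum]
  simp [jacobianMatrix, LinearMap.toMatrix_apply]

theorem norm_fderiv_le_jacobianFrobeniusNorm
    (f : EuclideanSpace ℝ (Fin d) → EuclideanSpace ℝ (Fin m)) (x : EuclideanSpace ℝ (Fin d)) :
    ‖fderiv ℝ f x‖ ≤ jacobianFrobeniusNorm f x := by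
  refine ContinuousLinearMap.opNorm_le_bound _ (Real.sqrt_nonneg _) fun u => ?_
  have hmul : (fderiv ℝ f x u).ofLp = (jacobianMatrix f x).mulVec u.ofLp :=
    (LinearMap.toMatrix_mulVec_repr (EuclideanSpace.basisFun (Fin d) ℝ).toBasis
      (EuclideanSpace.basisFun (Fin m) ℝ).toBasis (fderiv ℝ f x) u).symm
  calc ‖fderiv ℝ f x u‖
      = ‖jacobianMatrix f x * Matrix.replicateCol Unit u.ofLp‖ := by
        rw [← Matrix.replicateCol_mulVec, ← hmul, Matrix.frobenius_norm_replicateCol]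
    _ ≤ ‖jacobianMatrix f x‖ * ‖Matrix.replicateCol Unit u.ofLp‖ := Matrix.frobenius_norm_mul _ _
    _ = jacobianFrobeniusNorm f x * ‖u‖ := by
        rw [norm_jacobianMatrix, Matrix.frobenius_norm_replicateCol]

theorem det_id_sub_fderiv (f : EuclideanSpace ℝ (Fin d) → EuclideanSpace ℝ (Fin d))
    (x : EuclideanSpace ℝ (Fin d)) :
    (ContinuousLinearMap.id ℝ _ - fderiv ℝ f x).det = (1 - jacobianMatrix f x).det := by
  rw [jacobianMatrix, ContinuousLinearMap.det,
    ← LinearMap.det_toMatrix (EuclideanSpace.basisFun (Fin d) ℝ).toBasis,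
    ContinuousLinearMap.toLinearMap_sub, map_sub, ContinuousLinearMap.coe_id, LinearMap.toMatrix_id]

end Jacobian

section Lp

variable {S X ε : Type*} [MeasurableSpace S] [MeasurableSpace X] {ν : Measure S} {μ : Measure X}
  [TopologicalSpace ε] [ContinuousENorm ε] {p : ℝ≥0∞}

theorem eLpNorm_prod_eq_lintegral [SFinite ν] [SFinite μ] (hp₀ : p ≠ 0) (hp : p ≠ ∞)
    {g : S × X → ε} (hg : StronglyMeasurable g) :
    eLpNorm g p (ν.prod μ) =
      (∫⁻ x, eLpNorm (fun s => g (s, x)) p ν ^ p.toReal ∂μ) ^ (1 / p.toReal) := by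
  simp only [eLpNorm_eq_lintegral_rpow_enorm_toReal hp₀ hp, one_div]
  rw [lintegral_prod_symm _ (hg.enorm.pow_const _).aemeasurable]
  simp only [ENNReal.rpow_inv_rpow (ENNReal.toReal_ne_zero.2 ⟨hp₀, hp⟩)]

theorem eLpNorm_lintegral_enorm_le [SFinite ν] [SFinite μ] (hp₁ : 1 ≤ p) (hp : p ≠ ∞)
    {g : S × X → ε} (hg : StronglyMeasurable g) :
    eLpNorm (fun x => ∫⁻ s, ‖g (s, x)‖ₑ ∂ν) p μ ≤
      ν Set.univ ^ (1 - 1 / p.toReal) * eLpNorm g p (ν.prod μ) := by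
  have hp₀ : p ≠ 0 := (one_pos.trans_le hp₁).ne'
  have hslice (x : X) : StronglyMeasurable fun s => g (s, x) :=
    hg.comp_measurable measurable_prodMk_right
  have hnorm : Measurable fun x => eLpNorm (fun s => g (s, x)) p ν := by
    simp only [eLpNorm_eq_lintegral_rpow_enorm_toReal hp₀ hp]
    exact (hg.enorm.pow_const _).lintegral_prod_left'.pow_const _
  have hholder (x : X) : ‖∫⁻ s, ‖g (s, x)‖ₑ ∂ν‖ₑ ≤
      ν Set.univ ^ (1 - 1 / p.toReal) * ‖eLpNorm (fun s => g (s, x)) p ν‖ₑ := by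
    simpa [eLpNorm_one_eq_lintegral_enorm, mul_comm] using
      eLpNorm_le_eLpNorm_mul_rpow_measure_univ hp₁ (hslice x).aestronglyMeasurable
  refine (eLpNorm_le_mul_eLpNorm_of_ae_le_mul'' p hnorm.aestronglyMeasurable
    (.of_forall hholder)).trans_eq ?_
  rw [eLpNorm_prod_eq_lintegral hp₀ hp hg, eLpNorm_eq_lintegral_rpow_enorm_toReal hp₀ hp]
  simp only [enorm_eq_self]

theorem map_prodMk_le_smul_prod {Y : Type*} [MeasurableSpace Y] {ρ : Measure Y}
    [SFinite μ] [SFinite ρ] {φ : S → X → Y}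
    (hφ : Measurable (Function.uncurry φ)) {K : ℝ≥0} (hK : ∀ᵐ s ∂ν, μ.map (φ s) ≤ K • ρ) :
    (ν.prod μ).map (fun z => (z.1, φ z.1 z.2)) ≤ K • ν.prod ρ := by
  have hΦ : Measurable fun z : S × X => (z.1, φ z.1 z.2) := measurable_fst.prodMk hφ
  refine Measure.le_iff.2 fun B hB => ?_
  calc (ν.prod μ).map (fun z => (z.1, φ z.1 z.2)) B
      = ∫⁻ s, μ.map (φ s) (Prod.mk s ⁻¹' B) ∂ν := by
        rw [Measure.map_apply hΦ hB, Measure.prod_apply (hΦ hB)]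
        refine lintegral_congr fun s => ?_
        rw [Measure.map_apply hφ.of_uncurry_left (measurable_prodMk_left hB)]
        rfl
    _ ≤ ∫⁻ s, K * ρ (Prod.mk s ⁻¹' B) ∂ν :=
        lintegral_mono_ae (hK.mono fun s hs => hs _)
    _ = (K • ν.prod ρ) B := by
        rw [lintegral_const_mul _ (measurable_measure_prodMk_left hB), ← Measure.prod_apply hB]
        rfl

theorem eLpNorm_comp_le_of_map_le (hp : p ≠ ∞) {f : S → X} (hf : Measurable f) {K : ℝ≥0}
    (hK : ν.map f ≤ K • μ) {g : X → ε} (hg : StronglyMeasurable g) :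
    eLpNorm (g ∘ f) p ν ≤ K ^ (1 / p.toReal) * eLpNorm g p μ := by
  rw [← eLpNorm_map_measure hg.aestronglyMeasurable hf.aemeasurable]
  refine (eLpNorm_mono_measure g hK).trans_eq ?_
  have h := eLpNorm_smul_measure_of_ne_top (μ := μ) hp g K
  simpa using h

end Lp

section SlabMeasure

variable {X F : Type*} [MeasurableSpace X] [NormedAddCommGroup F] {μ : Measure X}

/-- The product of Lebesgue measure on the time interval `[a, b]` with `μ`; it turns the iterated
integrals over time and space into space-time `Lᵖ` norms. -/
noncomputable abbrev slabMeasure (μ : Measure X) (a b : ℝ) : Measure (ℝ × X) :=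
  (volume.restrict (Set.Icc a b)).prod μ

theorem sqrt_integral_norm_sq_eq_lpNorm {f : X → F} (hf : AEStronglyMeasurable f μ) :
    √(∫ x, ‖f x‖ ^ 2 ∂μ) = lpNorm f 2 μ := by
  rw [lpNorm_eq_integral_norm_rpow_toReal two_ne_zero ENNReal.ofNat_ne_top hf, Real.sqrt_eq_rpow]
  simp

theorem sqrt_intervalIntegral_integral_norm_sq_eq_lpNorm [SFinite μ] {a b : ℝ} (hab : a ≤ b)
    {f : ℝ × X → F} (hf : MemLp f 2 (slabMeasure μ a b)) :
    √(∫ s in a..b, ∫ y, ‖f (s, y)‖ ^ 2 ∂μ) = lpNorm f 2 (slabMeasure μ a b) := by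
  rw [← sqrt_integral_norm_sq_eq_lpNorm hf.aestronglyMeasurable,
    integral_prod _ (hf.integrable_norm_pow two_ne_zero), integral_Icc_eq_integral_Ioc,
    intervalIntegral.integral_of_le hab]

end SlabMeasure

section Characteristic

variable {E F : Type*} [NormedAddCommGroup E] [NormedSpace ℝ E] [NormedAddCommGroup F]
  {v : ℝ → E → F}

theorem stronglyMeasurable_sub_comp_characteristic [MeasurableSpace E] [BorelSpace E]
    [SecondCountableTopology E] (hv : Continuous (Function.uncurry v)) {w : E → E}
    (hw : Measurable w) (t Δt : ℝ) :
    StronglyMeasurable fun x => v t x - v (t - Δt) (x - Δt • w x) := by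
  have hfoot : Measurable fun x => (t - Δt, x - Δt • w x) := by fun_prop
  exact (hv.comp (Continuous.prodMk_right t)).stronglyMeasurable.sub
    (hv.stronglyMeasurable.comp_measurable hfoot)

theorem measurable_characteristic [MeasurableSpace E] [BorelSpace E] [SecondCountableTopology E]
    {w : E → E} (hw : Measurable w) (t : ℝ) :
    Measurable (Function.uncurry fun s x => x - (t - s) • w x) := by
  have : Measurable fun z : ℝ × E => w z.2 := hw.comp measurable_snd
  change Measurable fun z : ℝ × E => z.2 - (t - z.1) • w z.2
  fun_prop

theorem map_characteristic_le_smul_slabMeasure [MeasurableSpace E] [BorelSpace E]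
    [SecondCountableTopology E] {μ : Measure E} [SFinite μ] {w : E → E} (hw : Measurable w)
    {t Δt : ℝ} {K : ℝ≥0} (hK : ∀ τ ∈ Set.Icc 0 Δt, μ.map (fun x => x - τ • w x) ≤ K • μ) :
    (slabMeasure μ (t - Δt) t).map (fun z => (z.1, z.2 - (t - z.1) • w z.2)) ≤
      K • slabMeasure μ (t - Δt) t :=
  map_prodMk_le_smul_prod (measurable_characteristic hw t) <|
    ae_restrict_of_forall_mem measurableSet_Icc fun s hs =>
      hK (t - s) ⟨sub_nonneg.2 hs.2, sub_le_comm.1 hs.1⟩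

variable [NormedSpace ℝ F]

theorem deriv_fst_eq_fderiv_uncurry (hv : Differentiable ℝ (Function.uncurry v)) (s : ℝ) (y : E) :
    deriv (fun τ => v τ y) s = fderiv ℝ (Function.uncurry v) (s, y) (1, 0) := by
  have hpath : HasDerivAt (fun τ : ℝ => (τ, y)) (1, 0) s :=
    (hasDerivAt_id s).prodMk (hasDerivAt_const s y)
  exact ((hv (s, y)).hasFDerivAt.comp_hasDerivAt s hpath).deriv

theorem fderiv_snd_eq_fderiv_uncurry (hv : Differentiable ℝ (Function.uncurry v)) (s : ℝ) (y : E) :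
    fderiv ℝ (v s) y = (fderiv ℝ (Function.uncurry v) (s, y)).comp (.inr ℝ ℝ E) :=
  ((hv (s, y)).hasFDerivAt.comp y (hasFDerivAt_prodMk_right s y)).fderiv

theorem continuous_deriv_fst (hv : ContDiff ℝ 1 (Function.uncurry v)) :
    Continuous fun z : ℝ × E => deriv (fun τ => v τ z.2) z.1 := by
  simp only [deriv_fst_eq_fderiv_uncurry (hv.differentiable one_ne_zero)]
  exact (hv.continuous_fderiv one_ne_zero).clm_apply continuous_const

theorem continuous_fderiv_snd (hv : ContDiff ℝ 1 (Function.uncurry v)) :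
    Continuous fun z : ℝ × E => fderiv ℝ (v z.1) z.2 := by
  simp only [fderiv_snd_eq_fderiv_uncurry (hv.differentiable one_ne_zero)]
  exact (hv.continuous_fderiv one_ne_zero).clm_comp continuous_const

theorem hasCompactSupport_deriv_fst (hv : Differentiable ℝ (Function.uncurry v))
    (hsupp : HasCompactSupport (Function.uncurry v)) :
    HasCompactSupport fun z : ℝ × E => deriv (fun τ => v τ z.2) z.1 := by
  simp only [deriv_fst_eq_fderiv_uncurry hv]
  exact (hsupp.fderiv ℝ).comp_left (g := fun T : ℝ × E →L[ℝ] F => T (1, 0)) rfl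

theorem hasCompactSupport_fderiv_snd (hv : Differentiable ℝ (Function.uncurry v))
    (hsupp : HasCompactSupport (Function.uncurry v)) :
    HasCompactSupport fun z : ℝ × E => fderiv ℝ (v z.1) z.2 := by
  simp only [fderiv_snd_eq_fderiv_uncurry hv]
  exact (hsupp.fderiv ℝ).comp_left (g := fun T : ℝ × E →L[ℝ] F => T.comp (.inr ℝ ℝ E))
    (ContinuousLinearMap.zero_comp _)

theorem deriv_along_characteristic (hv : Differentiable ℝ (Function.uncurry v)) (t s : ℝ)
    (x ξ : E) :
    deriv (fun r => v r (x - (t - r) • ξ)) s =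
      deriv (fun τ => v τ (x - (t - s) • ξ)) s + fderiv ℝ (v s) (x - (t - s) • ξ) ξ := by
  have hfoot : HasDerivAt (fun r : ℝ => x - (t - r) • ξ) ξ s := by
    simpa using (((hasDerivAt_id s).const_sub t).smul_const ξ).const_sub x
  have hpath : HasDerivAt (fun r : ℝ => (r, x - (t - r) • ξ)) (1, ξ) s :=
    (hasDerivAt_id s).prodMk hfoot
  have hderiv := (hv (s, x - (t - s) • ξ)).hasFDerivAt.comp_hasDerivAt s hpath
  rw [deriv_fst_eq_fderiv_uncurry hv, fderiv_snd_eq_fderiv_uncurry hv]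
  exact hderiv.deriv.trans (by simp [← map_add])

theorem enorm_sub_along_characteristic_le (hv : ContDiff ℝ 1 (Function.uncurry v)) {Δt W : ℝ}
    (hΔt : 0 ≤ Δt) (t : ℝ) (x : E) {ξ : E} (hξ : ‖ξ‖ ≤ W) :
    ‖v t x - v (t - Δt) (x - Δt • ξ)‖ₑ ≤ ∫⁻ s in Set.Icc (t - Δt) t,
      ‖‖deriv (fun τ => v τ (x - (t - s) • ξ)) s‖ +
        W * ‖fderiv ℝ (v s) (x - (t - s) • ξ)‖‖ₑ := by
  have hcurve : ContDiff ℝ 1 fun r => v r (x - (t - r) • ξ) :=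
    hv.comp (by fun_prop : ContDiff ℝ 1 fun r : ℝ => (r, x - (t - r) • ξ))
  have hftc := enorm_sub_le_lintegral_deriv_of_contDiffOn_Icc hcurve.contDiffOn
    (sub_le_self t hΔt)
  simp only [sub_self, zero_smul, sub_zero, sub_sub_cancel] at hftc
  refine hftc.trans (lintegral_mono fun s => enorm_le_iff_norm_le.2 ?_)
  rw [deriv_along_characteristic (hv.differentiable one_ne_zero), mul_comm]
  refine (norm_add_le_of_le le_rfl ?_).trans (le_abs_self _)
  exact ContinuousLinearMap.le_opNorm_of_le _ hξ

theorem eLpNorm_sub_comp_characteristic_le [MeasurableSpace E] [BorelSpace E]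
    [SecondCountableTopology E] {μ : Measure E} [SFinite μ] {p : ℝ≥0∞} (hp₁ : 1 ≤ p) (hp : p ≠ ∞)
    (hv : ContDiff ℝ 1 (Function.uncurry v)) {w : E → E} (hw : Measurable w) {W : ℝ}
    (hW : ∀ x, ‖w x‖ ≤ W) (t : ℝ) {Δt : ℝ} (hΔt : 0 ≤ Δt) {K : ℝ≥0}
    (hK : ∀ τ ∈ Set.Icc 0 Δt, μ.map (fun x => x - τ • w x) ≤ K • μ) :
    eLpNorm (fun x => v t x - v (t - Δt) (x - Δt • w x)) p μ ≤
      ENNReal.ofReal Δt ^ (1 - 1 / p.toReal) * K ^ (1 / p.toReal) *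
        (eLpNorm (fun z : ℝ × E => deriv (fun τ => v τ z.2) z.1) p (slabMeasure μ (t - Δt) t) +
          ENNReal.ofReal W *
            eLpNorm (fun z : ℝ × E => fderiv ℝ (v z.1) z.2) p (slabMeasure μ (t - Δt) t)) := by
  set ν : Measure ℝ := volume.restrict (Set.Icc (t - Δt) t) with hν
  set G : ℝ × E → ℝ := fun z => ‖deriv (fun τ => v τ z.2) z.1‖ + W * ‖fderiv ℝ (v z.1) z.2‖
  set Φ : ℝ × E → ℝ × E := fun z => (z.1, z.2 - (t - z.1) • w z.2)
  have hDt := (continuous_deriv_fst hv).norm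
  have hDy := (continuous_fderiv_snd hv).norm
  have hG : Continuous G := by fun_prop
  have hΦ : Measurable Φ := measurable_fst.prodMk (measurable_characteristic hw t)
  have hmap : (ν.prod μ).map Φ ≤ K • ν.prod μ := map_characteristic_le_smul_slabMeasure hw hK
  have hW₀ : 0 ≤ W := (norm_nonneg _).trans (hW 0)
  have hνuniv : ν Set.univ = ENNReal.ofReal Δt := by simp [hν]
  calc eLpNorm (fun x => v t x - v (t - Δt) (x - Δt • w x)) p μ
      ≤ eLpNorm (fun x => ∫⁻ s, ‖(G ∘ Φ) (s, x)‖ₑ ∂ν) p μ :=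
        eLpNorm_mono_enorm fun x => enorm_sub_along_characteristic_le hv hΔt t x (hW x)
    _ ≤ ENNReal.ofReal Δt ^ (1 - 1 / p.toReal) * eLpNorm (G ∘ Φ) p (ν.prod μ) :=
        hνuniv ▸ eLpNorm_lintegral_enorm_le hp₁ hp (hG.stronglyMeasurable.comp_measurable hΦ)
    _ ≤ ENNReal.ofReal Δt ^ (1 - 1 / p.toReal) *
          (K ^ (1 / p.toReal) * eLpNorm G p (ν.prod μ)) := by
        gcongr
        exact eLpNorm_comp_le_of_map_le hp hΦ hmap hG.stronglyMeasurable
    _ ≤ _ := by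
        rw [mul_assoc]
        gcongr
        refine (eLpNorm_add_le hDt.aestronglyMeasurable
          (hDy.const_mul W).aestronglyMeasurable hp₁).trans ?_
        gcongr
        · exact (eLpNorm_norm _).le
        · exact eLpNorm_le_mul_eLpNorm_of_ae_le_mul (.of_forall fun z => by
            simp [norm_mul, abs_of_nonneg hW₀]) p

theorem lpNorm_sub_comp_characteristic_le [MeasurableSpace E] [BorelSpace E]
    [SecondCountableTopology E] {μ : Measure E} [SFinite μ] {p : ℝ≥0∞} (hp₁ : 1 ≤ p) (hp : p ≠ ∞)
    (hv : ContDiff ℝ 1 (Function.uncurry v)) {w : E → E} (hw : Measurable w) {W : ℝ}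
    (hW : ∀ x, ‖w x‖ ≤ W) (t : ℝ) {Δt : ℝ} (hΔt : 0 ≤ Δt) {K : ℝ≥0}
    (hK : ∀ τ ∈ Set.Icc 0 Δt, μ.map (fun x => x - τ • w x) ≤ K • μ)
    (hDt : MemLp (fun z : ℝ × E => deriv (fun τ => v τ z.2) z.1) p (slabMeasure μ (t - Δt) t))
    (hDy : MemLp (fun z : ℝ × E => fderiv ℝ (v z.1) z.2) p (slabMeasure μ (t - Δt) t)) :
    lpNorm (fun x => v t x - v (t - Δt) (x - Δt • w x)) p μ ≤
      Δt ^ (1 - 1 / p.toReal) * K ^ (1 / p.toReal) *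
        (lpNorm (fun z : ℝ × E => deriv (fun τ => v τ z.2) z.1) p (slabMeasure μ (t - Δt) t) +
          W * lpNorm (fun z : ℝ × E => fderiv ℝ (v z.1) z.2) p (slabMeasure μ (t - Δt) t)) := by
  have hW₀ : 0 ≤ W := (norm_nonneg _).trans (hW 0)
  have hp_exp : 0 ≤ 1 - 1 / p.toReal :=
    sub_nonneg.2 (div_le_one_of_le₀ (by simpa using ENNReal.toReal_mono hp hp₁) (by positivity))
  have hmeas := stronglyMeasurable_sub_comp_characteristic hv.continuous hw t Δt
  have hDt_ne_top := hDt.eLpNorm_ne_top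
  have hDy_ne_top := hDy.eLpNorm_ne_top
  have h := ENNReal.toReal_mono (by finiteness)
    (eLpNorm_sub_comp_characteristic_le hp₁ hp hv hw hW t hΔt hK)
  rwa [ENNReal.toReal_mul, ENNReal.toReal_mul, ENNReal.toReal_add (by finiteness) (by finiteness),
    ENNReal.toReal_mul, ← ENNReal.toReal_rpow, ← ENNReal.toReal_rpow, ENNReal.toReal_ofReal hΔt,
    ENNReal.toReal_ofReal hW₀, ENNReal.coe_toReal, toReal_eLpNorm hmeas.aestronglyMeasurable,
    toReal_eLpNorm hDt.aestronglyMeasurable, toReal_eLpNorm hDy.aestronglyMeasurable] at h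

end Characteristic

section ChangeOfVariables

theorem map_le_smul_addHaar_of_one_le_mul_abs_det {E : Type*} [NormedAddCommGroup E]
    [NormedSpace ℝ E] [FiniteDimensional ℝ E] [MeasurableSpace E] [BorelSpace E] (μ : Measure E)
    [μ.IsAddHaarMeasure] {f : E → E} {f' : E → E →L[ℝ] E} (hinj : f.Injective)
    (hf : ∀ x, HasFDerivAt f (f' x) x) {K : ℝ≥0} (hK : ∀ x, 1 ≤ K * |(f' x).det|) :
    μ.map f ≤ K • μ := by
  have hmeas : Measurable f :=
    (continuous_iff_continuousAt.2 fun x => (hf x).continuousAt).measurable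
  refine Measure.le_iff.2 fun B hB => ?_
  calc μ.map f B = ∫⁻ _ in f ⁻¹' B, 1 ∂μ := by rw [Measure.map_apply hmeas hB, setLIntegral_one]
    _ ≤ ∫⁻ x in f ⁻¹' B, K * ENNReal.ofReal |(f' x).det| ∂μ := by
        refine lintegral_mono fun x => ?_
        rw [← ENNReal.ofReal_coe_nnreal, ← ENNReal.ofReal_mul K.coe_nonneg]
        exact ENNReal.one_le_ofReal.2 (hK x)
    _ = K * μ (f '' (f ⁻¹' B)) := by
        rw [lintegral_const_mul' _ _ ENNReal.coe_ne_top,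
          lintegral_abs_det_fderiv_eq_addHaar_image μ (hmeas hB)
            (fun x _ => (hf x).hasFDerivWithinAt) hinj.injOn]
    _ ≤ K * μ B := by gcongr; exact Set.image_preimage_subset f B

theorem injective_sub_of_lipschitzWith {E : Type*} [NormedAddCommGroup E] {u : E → E} {k : ℝ≥0}
    (hk : k < 1) (hu : LipschitzWith k u) : Function.Injective fun x => x - u x := by
  simpa [sub_eq_add_neg] using
    (AntilipschitzWith.id.add_lipschitzWith hu.neg (by simpa using hk)).injective

theorem map_sub_le_smul_volume {d : ℕ} {u : EuclideanSpace ℝ (Fin d) → EuclideanSpace ℝ (Fin d)}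
    (hu : Differentiable ℝ u) {c : ℝ} (hc : c < 1) (hJ : ∀ x, jacobianFrobeniusNorm u x ≤ c) :
    (volume.map fun x => x - u x) ≤ (invDetOneSubBound d c).toNNReal • volume := by
  have hlip : LipschitzWith c.toNNReal u := lipschitzWith_of_nnnorm_fderiv_le hu fun x =>
    NNReal.le_toNNReal_of_coe_le ((norm_fderiv_le_jacobianFrobeniusNorm u x).trans (hJ x))
  refine map_le_smul_addHaar_of_one_le_mul_abs_det volume
    (injective_sub_of_lipschitzWith (Real.toNNReal_lt_one.2 hc) hlip)
    (fun x => (hasFDerivAt_id x).sub (hu x).hasFDerivAt) fun x => ?_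
  rw [det_id_sub_fderiv]
  calc 1 ≤ invDetOneSubBound d c * |(1 - jacobianMatrix u x).det| := by
        simpa using one_le_invDetOneSubBound_mul_norm_det hc
          ((norm_jacobianMatrix u x).trans_le (hJ x))
    _ ≤ _ := by gcongr; exact Real.le_coe_toNNReal _

theorem jacobianFrobeniusNorm_const_smul {d m : ℕ}
    {f : EuclideanSpace ℝ (Fin d) → EuclideanSpace ℝ (Fin m)} {x : EuclideanSpace ℝ (Fin d)}
    (hf : DifferentiableAt ℝ f x) (τ : ℝ) :
    jacobianFrobeniusNorm (fun y => τ • f y) x = |τ| * jacobianFrobeniusNorm f x := by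
  simp_rw [jacobianFrobeniusNorm, fderiv_fun_const_smul hf, smul_apply,
    PiLp.smul_apply, smul_eq_mul, mul_pow, ← Finset.mul_sum]
  rw [Real.sqrt_mul (sq_nonneg τ), Real.sqrt_sq_eq_abs]

theorem map_sub_smul_le_smul_volume {d : ℕ}
    {w : EuclideanSpace ℝ (Fin d) → EuclideanSpace ℝ (Fin d)} (hw : Differentiable ℝ w) {T L : ℝ}
    (hTL : T * L < 1) (hJ : ∀ x, jacobianFrobeniusNorm w x ≤ L) {τ : ℝ} (hτ : τ ∈ Set.Icc 0 T) :
    (volume.map fun x => x - τ • w x) ≤ (invDetOneSubBound d (T * L)).toNNReal • volume := by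
  refine map_sub_le_smul_volume (hw.const_smul τ) hTL fun x => ?_
  rw [Pi.smul_def, jacobianFrobeniusNorm_const_smul (hw x), abs_of_nonneg hτ.1]
  exact mul_le_mul hτ.2 (hJ x) (Real.sqrt_nonneg _) (hτ.1.trans hτ.2)

end ChangeOfVariables

section Euclidean

variable {d m : ℕ} {v : ℝ → EuclideanSpace ℝ (Fin d) → EuclideanSpace ℝ (Fin m)}

theorem continuous_jacobianFrobeniusNorm_snd (hv : ContDiff ℝ 1 (Function.uncurry v)) :
    Continuous fun z : ℝ × EuclideanSpace ℝ (Fin d) => jacobianFrobeniusNorm (v z.1) z.2 := by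
  have := continuous_fderiv_snd hv
  unfold jacobianFrobeniusNorm
  fun_prop

theorem hasCompactSupport_jacobianFrobeniusNorm_snd
    (hv : Differentiable ℝ (Function.uncurry v)) (hsupp : HasCompactSupport (Function.uncurry v)) :
    HasCompactSupport fun z : ℝ × EuclideanSpace ℝ (Fin d) => jacobianFrobeniusNorm (v z.1) z.2 :=
  (hasCompactSupport_fderiv_snd hv hsupp).mono' fun z hz =>
    subset_tsupport _ fun h => hz <| by simp [jacobianFrobeniusNorm, h]

end Euclidean

theorem L2_time_diff_comp_characteristic_general (d m : ℕ) (Δt L : ℝ) (hΔt : 0 ≤ Δt)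
    (hΔtL : Δt * L < 1)
    (w : EuclideanSpace ℝ (Fin d) → EuclideanSpace ℝ (Fin d))
    (hw : Differentiable ℝ w)
    (hJ : ∀ x, jacobianFrobeniusNorm w x ≤ L)
    (hbdd : BddAbove (Set.range fun x => ‖w x‖))
    (v : ℝ → EuclideanSpace ℝ (Fin d) → EuclideanSpace ℝ (Fin m))
    (hv : ContDiff ℝ 1 (Function.uncurry v))
    (hvsupp : HasCompactSupport (Function.uncurry v))
    (t : ℝ) :
    √(∫ x, ‖v t x - v (t - Δt) (x - Δt • w x)‖ ^ 2) ≤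
      √(invDetOneSubBound d (Δt * L) * Δt) *
        (√(∫ s in (t - Δt)..t, ∫ y, ‖deriv (fun τ => v τ y) s‖ ^ 2) +
          (⨆ x, ‖w x‖) *
            √(∫ s in (t - Δt)..t, ∫ y, (jacobianFrobeniusNorm (v s) y) ^ 2)) := by
  have hwm := hw.continuous.measurable
  have hdensity := fun τ hτ => map_sub_smul_le_smul_volume (τ := τ) hw hΔtL hJ hτ
  have hL : 0 ≤ L := (Real.sqrt_nonneg _).trans (hJ 0)
  have hK₀ := invDetOneSubBound_nonneg d (mul_nonneg hΔt hL) hΔtL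
  set ν := slabMeasure (volume : Measure (EuclideanSpace ℝ (Fin d))) (t - Δt) t
  have hvd := hv.differentiable one_ne_zero
  have hDt : MemLp (fun z : ℝ × _ => deriv (fun τ => v τ z.2) z.1) 2 ν :=
    (continuous_deriv_fst hv).memLp_of_hasCompactSupport (hasCompactSupport_deriv_fst hvd hvsupp)
  have hDy : MemLp (fun z : ℝ × _ => fderiv ℝ (v z.1) z.2) 2 ν :=
    (continuous_fderiv_snd hv).memLp_of_hasCompactSupport (hasCompactSupport_fderiv_snd hvd hvsupp)
  have hJv : MemLp (fun z : ℝ × _ => jacobianFrobeniusNorm (v z.1) z.2) 2 ν :=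
    (continuous_jacobianFrobeniusNorm_snd hv).memLp_of_hasCompactSupport
      (hasCompactSupport_jacobianFrobeniusNorm_snd hvd hvsupp)
  have hJv_sq := sqrt_intervalIntegral_integral_norm_sq_eq_lpNorm (sub_le_self t hΔt) hJv
  simp only [Real.norm_eq_abs, sq_abs] at hJv_sq
  rw [hJv_sq, sqrt_intervalIntegral_integral_norm_sq_eq_lpNorm (sub_le_self t hΔt) hDt,
    sqrt_integral_norm_sq_eq_lpNorm
      (stronglyMeasurable_sub_comp_characteristic hv.continuous hwm t Δt).aestronglyMeasurable]
  refine (lpNorm_sub_comp_characteristic_le one_le_two ENNReal.ofNat_ne_top hv hwm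
    (le_ciSup hbdd) t hΔt hdensity hDt hDy).trans ?_
  have hconst : Δt ^ (1 - 1 / (2 : ℝ≥0∞).toReal) *
      ((invDetOneSubBound d (Δt * L)).toNNReal : ℝ) ^ (1 / (2 : ℝ≥0∞).toReal) =
      √(invDetOneSubBound d (Δt * L) * Δt) := by
    rw [Real.sqrt_mul hK₀, Real.coe_toNNReal _ hK₀, Real.sqrt_eq_rpow, Real.sqrt_eq_rpow, mul_comm]
    norm_num
  rw [hconst]
  gcongr
  · exact Real.iSup_nonneg fun x => norm_nonneg _
  · exact lpNorm_mono_real hJv fun z => norm_fderiv_le_jacobianFrobeniusNorm _ _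

/-- Estimate for the difference between `v(t, ·)` and the composition of `v(t - Δt, ·)`
with the approximate characteristic map `x ↦ x - Δt·w(x)`. -/
theorem L2_time_diff_comp_characteristic (d m : ℕ) (hd : d = 2 ∨ d = 3)
    (Δt L : ℝ) (hΔt : 0 < Δt) (hL : 0 ≤ L) (hΔtL : Δt * L ≤ 1 / 4)
    (w : EuclideanSpace ℝ (Fin d) → EuclideanSpace ℝ (Fin d))
    (hw : Differentiable ℝ w)
    (hJ : ∀ x, jacobianFrobeniusNorm w x ≤ L)
    (hbdd : BddAbove (Set.range fun x => ‖w x‖))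
    (v : ℝ → EuclideanSpace ℝ (Fin d) → EuclideanSpace ℝ (Fin m))
    (hv : ContDiff ℝ 1 (Function.uncurry v))
    (hvsupp : HasCompactSupport (Function.uncurry v))
    (t : ℝ) :
    Real.sqrt (∫ x, ‖v t x - v (t - Δt) (x - Δt • w x)‖ ^ 2) ≤
      Real.sqrt (2 * Δt) *
        (Real.sqrt (∫ s in (t - Δt)..t, ∫ y, ‖deriv (fun τ => v τ y) s‖ ^ 2) +
          (⨆ x, ‖w x‖) *
            Real.sqrt (∫ s in (t - Δt)..t, ∫ y,
              (jacobianFrobeniusNorm (v s) y) ^ 2)) := by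
  refine (L2_time_diff_comp_characteristic_general d m Δt L hΔt.le (by linarith) w hw hJ hbdd v hv
    hvsupp t).trans ?_
  gcongr
  · exact add_nonneg (Real.sqrt_nonneg _)
      (mul_nonneg (Real.iSup_nonneg fun x => norm_nonneg _) (Real.sqrt_nonneg _))
  · exact invDetOneSubBound_le_two hd (mul_nonneg hΔt.le hL) hΔtL
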